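/- arXiv:1905.07616 — 2 statements merged into one kernel-verified Lean document; each statement's English description precedes it below -/
import Mathlib

section
/- The number of Straight hands — 5-card hands whose set of values is a straight value-set but whose cards do not all have the same suit (so the hand is neither a Royal Flush nor a Straight Flush) — equals 10200. -/
/-- A card is a pair of a value in `Fin 13` (values 0–12 representing
2,3,4,5,6,7,8,9,10,J,Q,K,A) and a suit in `Fin 4`. -/
abbrev Card : Type := Fin 13 × Fin 4

/-- The set of all 5-card poker hands: 5-element subsets of the 52-card deck. -/
def pokerHands : Finset (Finset Card) :=
  (Finset.univ : Finset Card).powersetCard 5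

/-- The set of values appearing in a hand. -/
def handValues (h : Finset Card) : Finset (Fin 13) := h.image Prod.fst

/-- The number of cards of the hand `h` having value `v`. -/
def countValue (h : Finset Card) (v : Fin 13) : ℕ :=
  (h.filter fun c => c.1 = v).card

/-- All cards of the hand have the same suit. -/
def SameSuit (h : Finset Card) : Prop := ∃ s : Fin 4, ∀ c ∈ h, c.2 = s

instance : DecidablePred SameSuit := fun h =>
  inferInstanceAs (Decidable (∃ s : Fin 4, ∀ c ∈ h, c.2 = s))

/-- The 10 straight value-sets: `{12,0,1,2,3}` (representing A,2,3,4,5) and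
`{i,i+1,i+2,i+3,i+4}` for `0 ≤ i ≤ 8`. -/
def straightValueSets : Finset (Finset (Fin 13)) :=
  { ({12, 0, 1, 2, 3} : Finset (Fin 13)),
    {0, 1, 2, 3, 4}, {1, 2, 3, 4, 5}, {2, 3, 4, 5, 6}, {3, 4, 5, 6, 7},
    {4, 5, 6, 7, 8}, {5, 6, 7, 8, 9}, {6, 7, 8, 9, 10}, {7, 8, 9, 10, 11},
    {8, 9, 10, 11, 12} }

/-- Royal Flush: the set of values is exactly `{8,9,10,11,12}`
(i.e. 10, J, Q, K, A) and all cards have the same suit. -/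
def RoyalFlush (h : Finset Card) : Prop :=
  handValues h = {8, 9, 10, 11, 12} ∧ SameSuit h

/-- Straight Flush: all cards have the same suit and the set of values is a
straight value-set other than `{8,9,10,11,12}`. -/
def StraightFlush (h : Finset Card) : Prop :=
  SameSuit h ∧ handValues h ∈ straightValueSets ∧
    handValues h ≠ ({8, 9, 10, 11, 12} : Finset (Fin 13))

/-- Four of a Kind: for some value `v`, the hand contains all 4 cards of
value `v` plus one additional card of a different value. -/
def FourOfAKind (h : Finset Card) : Prop :=
  ∃ v : Fin 13, countValue h v = 4 ∧ ∃ c ∈ h, c.1 ≠ v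

/-- Full House: there are distinct values `v ≠ w` such that exactly 3 cards
of the hand have value `v` and exactly 2 cards have value `w`. -/
def FullHouse (h : Finset Card) : Prop :=
  ∃ v w : Fin 13, v ≠ w ∧ countValue h v = 3 ∧ countValue h w = 2

/-- Flush: all cards have the same suit and the set of values is not a
straight value-set. -/
def Flush (h : Finset Card) : Prop :=
  SameSuit h ∧ handValues h ∉ straightValueSets

/-- Straight: the set of values is a straight value-set but the cards are
not all of the same suit. -/
def Straight (h : Finset Card) : Prop :=
  handValues h ∈ straightValueSets ∧ ¬ SameSuit h

/-- Three of a Kind: for some value `v`, exactly 3 cards of the hand have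
value `v` and the remaining 2 cards have two further distinct values. -/
def ThreeOfAKind (h : Finset Card) : Prop :=
  ∃ v : Fin 13, countValue h v = 3 ∧
    ∃ a b : Fin 13, a ≠ b ∧ a ≠ v ∧ b ≠ v ∧
      countValue h a = 1 ∧ countValue h b = 1

/-- Two Pair: there are distinct values `v ≠ w` such that exactly 2 cards of
the hand have value `v`, exactly 2 cards have value `w`, and the remaining
card has a value different from both. -/
def TwoPair (h : Finset Card) : Prop :=
  ∃ v w : Fin 13, v ≠ w ∧ countValue h v = 2 ∧ countValue h w = 2 ∧
    ∃ c ∈ h, c.1 ≠ v ∧ c.1 ≠ w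

/-- Pair: for some value `v`, exactly 2 cards of the hand have value `v` and
the remaining 3 cards have three further pairwise distinct values. -/
def Pair (h : Finset Card) : Prop :=
  ∃ v : Fin 13, countValue h v = 2 ∧
    ∃ a b c : Fin 13, a ≠ b ∧ a ≠ c ∧ b ≠ c ∧ a ≠ v ∧ b ≠ v ∧ c ≠ v ∧
      countValue h a = 1 ∧ countValue h b = 1 ∧ countValue h c = 1

/-- High Card: the 5 cards have 5 pairwise distinct values, the set of values
is not a straight value-set, and the cards are not all of the same suit. -/
def HighCard (h : Finset Card) : Prop :=
  (handValues h).card = 5 ∧ handValues h ∉ straightValueSets ∧ ¬ SameSuit h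

instance : DecidablePred RoyalFlush := fun h => by unfold RoyalFlush; infer_instance

instance : DecidablePred StraightFlush := fun h => by unfold StraightFlush; infer_instance

instance : DecidablePred FourOfAKind := fun h => by unfold FourOfAKind; infer_instance

instance : DecidablePred FullHouse := fun h => by unfold FullHouse; infer_instance

instance : DecidablePred Flush := fun h => by unfold Flush; infer_instance

instance : DecidablePred Straight := fun h => by unfold Straight; infer_instance

instance : DecidablePred ThreeOfAKind := fun h => by unfold ThreeOfAKind; infer_instance

instance : DecidablePred TwoPair := fun h => by unfold TwoPair; infer_instance

instance : DecidablePred Pair := fun h => by unfold Pair; infer_instance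

instance : DecidablePred HighCard := fun h => by unfold HighCard; infer_instance

/-! A hand of `#V` cards with value-set `V` has one card of each value in `V`, so it is the graph of
a function from `V` to the suits, and its cards share a suit exactly when this function is constant.
Each of the 10 straight value-sets thus contributes `4 ^ 5 - 4` straights. -/

section

open Finset

variable {α β ι : Type*}

/-- The graph of a function defined on the finite set `V` only, as a finite set of pairs. For a set
`V` of card values and a choice `f` of suits, it is the hand with the cards `(v, f v)`, `v ∈ V`. -/
def graphOver (V : Finset α) (f : V → β) : Finset (α × β) :=
  univ.map ⟨fun v : V => (v.1, f v), .of_comp (f := Prod.fst) Subtype.val_injective⟩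

lemma mk_mem_graphOver {V : Finset α} (f : V → β) (v : V) : (v.1, f v) ∈ graphOver V f :=
  mem_map.2 ⟨v, mem_univ v, rfl⟩

lemma forall_mem_graphOver {V : Finset α} {f : V → β} {p : α × β → Prop} :
    (∀ c ∈ graphOver V f, p c) ↔ ∀ v : V, p (v, f v) := by
  simp only [graphOver, forall_mem_map, mem_univ, forall_true_left, Function.Embedding.coeFn_mk]

lemma card_graphOver (V : Finset α) (f : V → β) : #(graphOver V f) = #V := by
  rw [graphOver, card_map, card_univ, Fintype.card_coe]

lemma graphOver_injective (V : Finset α) :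
    Function.Injective (graphOver V : (V → β) → Finset (α × β)) := by
  intro f g hfg
  have hmem : ∀ c ∈ graphOver V g, ∀ hc : c.1 ∈ V, c.2 = g ⟨c.1, hc⟩ :=
    forall_mem_graphOver.2 fun _ _ => rfl
  funext v
  exact hmem (v, f v) (hfg ▸ mk_mem_graphOver f v) v.2

variable [DecidableEq α]

lemma image_fst_graphOver (V : Finset α) (f : V → β) : (graphOver V f).image Prod.fst = V := by
  ext v
  simp [graphOver]

lemma exists_graphOver_eq_iff {V : Finset α} {s : Finset (α × β)} :
    (∃ f, graphOver V f = s) ↔ #s = #V ∧ s.image Prod.fst = V := by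
  constructor
  · rintro ⟨f, rfl⟩
    exact ⟨card_graphOver V f, image_fst_graphOver V f⟩
  · rintro ⟨hcard, rfl⟩
    have hex : ∀ v : s.image Prod.fst, ∃ b, (v.1, b) ∈ s := by
      simp only [Subtype.forall, mem_image, Prod.exists, exists_and_right, exists_eq_right,
        imp_self, implies_true]
    choose f hf using hex
    exact ⟨f, eq_of_subset_of_card_le (forall_mem_graphOver.2 hf)
      (hcard.trans (card_graphOver _ f).symm).le⟩

variable [Fintype β] [DecidableEq β]

lemma card_filter_not_constant [Fintype ι] [DecidableEq ι] [Nonempty ι] :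
    #{f : ι → β | ¬ ∃ b, ∀ i, f i = b} =
      Fintype.card β ^ Fintype.card ι - Fintype.card β := by
  have hconst : ({f : ι → β | ∃ b, ∀ i, f i = b} : Finset (ι → β)) =
      univ.map ⟨Function.const ι, Function.const_injective⟩ := by
    ext f
    simp [funext_iff, eq_comm]
  rw [filter_not, card_sdiff_of_subset (filter_subset _ _), hconst, card_map, card_univ, card_univ,
    Fintype.card_fun]

variable [Fintype α]

lemma card_filter_image_fst_eq_and_not_constant {V : Finset α} (hV : V.Nonempty) :
    #{h ∈ (univ : Finset (α × β)).powersetCard #V |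
        h.image Prod.fst = V ∧ ¬ ∃ b, ∀ c ∈ h, c.2 = b} =
      Fintype.card β ^ #V - Fintype.card β := by
  have := hV.to_subtype
  rw [← Fintype.card_coe V, ← card_filter_not_constant,
    ← card_map ⟨graphOver V, graphOver_injective V⟩, Fintype.card_coe]
  congr 1
  ext h
  simp only [mem_filter, mem_powersetCard_univ, mem_map, mem_univ, true_and,
    Function.Embedding.coeFn_mk]
  rw [← and_assoc, ← exists_graphOver_eq_iff]
  constructor
  · rintro ⟨⟨f, rfl⟩, hf⟩
    exact ⟨f, by simpa only [forall_mem_graphOver] using hf, rfl⟩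
  · rintro ⟨f, hf, rfl⟩
    exact ⟨⟨f, rfl⟩, by simpa only [forall_mem_graphOver] using hf⟩

theorem card_straight_general {k : ℕ} (hk : k ≠ 0) {𝒱 : Finset (Finset α)}
    (h𝒱 : (𝒱 : Set (Finset α)).Sized k) :
    #{h ∈ (univ : Finset (α × β)).powersetCard k |
        h.image Prod.fst ∈ 𝒱 ∧ ¬ ∃ b, ∀ c ∈ h, c.2 = b} =
      #𝒱 * (Fintype.card β ^ k - Fintype.card β) := by
  rw [card_eq_sum_card_fiberwise (f := image Prod.fst) (t := 𝒱)
    fun _ hh => (mem_filter.1 hh).2.1]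
  refine sum_const_nat fun V hV => ?_
  obtain rfl := h𝒱 hV
  rw [← card_filter_image_fst_eq_and_not_constant (card_ne_zero.1 hk), filter_filter]
  congr 1
  refine filter_congr fun h _ => ⟨fun ⟨⟨_, hs⟩, hv⟩ => ⟨hv, hs⟩, ?_⟩
  rintro ⟨rfl, hs⟩
  exact ⟨⟨hV, hs⟩, rfl⟩

end

lemma card_straightValueSets : straightValueSets.card = 10 := by
  rw [straightValueSets]
  decide

lemma sized_straightValueSets : (straightValueSets : Set (Finset (Fin 13))).Sized 5 := by
  simp [Set.Sized, straightValueSets]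

/-- There are exactly 10200 Straight hands. -/
theorem card_straight : (pokerHands.filter Straight).card = 10200 := by
  convert card_straight_general (β := Fin 4) (by norm_num) sized_straightValueSets using 2
  · congr!
  · norm_num [card_straightValueSets]
end

section
/- The number of Pair hands — 5-card hands for which there exists a value v such that exactly 2 cards of the hand have value v and the remaining 3 cards have three further pairwise distinct values (all distinct from v) — equals 1098240. -/
/-!
A hand is determined by its cards of each of the 13 values, and these can be chosen
independently. So the number of hands with prescribed multiplicities `k v` is the product of the
binomial coefficients `Nat.choose 4 (k v)`. A pair hand is one whose multiplicities are `2` at one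
value, `1` at three others and `0` elsewhere: there are `13 * Nat.choose 12 3` such multiplicity
functions, and each contributes `Nat.choose 4 2 * 4 ^ 3` hands.
-/

open Finset

section FiberCard

variable {α β : Type*} [DecidableEq β]

/-- The number of elements of `s` in the fibre of `f` over `b`. For a hand `s` and
`f = Prod.fst`, it is the number of cards of value `b`. -/
def fiberCard (f : α → β) (s : Finset α) (b : β) : ℕ := #{a ∈ s | f a = b}

theorem sum_fiberCard [Fintype β] (f : α → β) (s : Finset α) : ∑ b, fiberCard f s b = #s :=
  (card_eq_sum_card_fiberwise fun _ _ => mem_coe.2 (mem_univ _)).symm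

theorem filter_filter_mem_apply_eq [Fintype α] [DecidableEq α] {f : α → β} {t : β → Finset α}
    {b : β} (ht : ∀ a ∈ t b, f a = b) :
    ({a | a ∈ t (f a)} : Finset α).filter (fun a => f a = b) = t b := by
  ext a
  simp only [mem_filter, mem_univ, true_and]
  constructor
  · rintro ⟨ha, rfl⟩
    exact ha
  · intro ha
    obtain rfl := ht a ha
    exact ⟨ha, rfl⟩

theorem card_filter_fiberCard_eq [Fintype α] [Fintype β] (f : α → β) (k : β → ℕ) :
    #{s : Finset α | fiberCard f s = k} = ∏ b, (fiberCard f univ b).choose (k b) := by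
  classical
  have card_choices :
      #(Fintype.piFinset fun b => ({a | f a = b} : Finset α).powersetCard (k b)) =
        ∏ b, (fiberCard f univ b).choose (k b) := by
    simp only [Fintype.card_piFinset, card_powersetCard, fiberCard]
  have mem_choices {t : β → Finset α} :
      t ∈ (Fintype.piFinset fun b => ({a | f a = b} : Finset α).powersetCard (k b)) ↔
        ∀ b, (∀ a ∈ t b, f a = b) ∧ #(t b) = k b := by
    simp [mem_powersetCard, subset_iff]
  rw [← card_choices]
  refine card_nbij' (fun s b => ({a ∈ s | f a = b} : Finset α))
    (fun t => ({a | a ∈ t (f a)} : Finset α)) ?_ ?_ ?_ ?_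
  · intro s hs
    rw [mem_coe, mem_filter_univ] at hs
    exact mem_choices.2 fun b => ⟨fun a ha => (mem_filter.1 ha).2, congrFun hs b⟩
  · intro t ht
    rw [mem_coe, mem_filter_univ]
    funext b
    obtain ⟨htb, card_tb⟩ := mem_choices.1 ht b
    rw [fiberCard, filter_filter_mem_apply_eq htb, card_tb]
  · intro s _
    ext a
    simp
  · exact fun t ht => funext fun b => filter_filter_mem_apply_eq (mem_choices.1 ht b).1

end FiberCard

section PairProfile

variable {β : Type*} [DecidableEq β] {v w : β} {S T : Finset β}

/-- The multiplicities of a pair of value `v` together with one kicker of each value in `S`.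
It is meant for `v ∉ S`; otherwise `v` still has multiplicity `2`. -/
def pairProfile (v : β) (S : Finset β) (b : β) : ℕ :=
  if b = v then 2 else if b ∈ S then 1 else 0

@[simp]
theorem pairProfile_self (v : β) (S : Finset β) : pairProfile v S v = 2 := if_pos rfl

theorem pairProfile_of_mem (hv : v ∉ S) {b : β} (hb : b ∈ S) : pairProfile v S b = 1 := by
  rw [pairProfile, if_neg (ne_of_mem_of_not_mem hb hv), if_pos hb]

theorem pairProfile_of_notMem {b : β} (hb : b ∉ insert v S) : pairProfile v S b = 0 := by
  rw [mem_insert, not_or] at hb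
  rw [pairProfile, if_neg hb.1, if_neg hb.2]

theorem pairProfile_eq_two_iff {b : β} : pairProfile v S b = 2 ↔ b = v := by
  unfold pairProfile
  split_ifs <;> simp_all

theorem pairProfile_eq_one_iff (hv : v ∉ S) {b : β} : pairProfile v S b = 1 ↔ b ∈ S := by
  unfold pairProfile
  split_ifs <;> simp_all

theorem pairProfile_inj (hv : v ∉ S) (hw : w ∉ T) :
    pairProfile v S = pairProfile w T ↔ v = w ∧ S = T := by
  refine ⟨fun h => ⟨?_, ?_⟩, by rintro ⟨rfl, rfl⟩; rfl⟩
  · rw [← pairProfile_eq_two_iff (S := T), ← h, pairProfile_self]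
  · ext b
    rw [← pairProfile_eq_one_iff hv, h, pairProfile_eq_one_iff hw]

@[to_additive]
theorem prod_comp_pairProfile [Fintype β] {M : Type*} [CommMonoid M] {g : ℕ → M} (hg : g 0 = 1)
    (hv : v ∉ S) : ∏ b, g (pairProfile v S b) = g 2 * g 1 ^ #S := by
  calc ∏ b, g (pairProfile v S b)
      = ∏ b ∈ insert v S, g (pairProfile v S b) :=
        (prod_subset (subset_univ _) fun b _ hb => by rw [pairProfile_of_notMem hb, hg]).symm
    _ = g 2 * ∏ b ∈ S, g (pairProfile v S b) := by rw [prod_insert hv, pairProfile_self]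
    _ = g 2 * g 1 ^ #S := by
        rw [prod_congr rfl fun b hb => by rw [pairProfile_of_mem hv hb], prod_const]

theorem sum_pairProfile [Fintype β] (hv : v ∉ S) : ∑ b, pairProfile v S b = #S + 2 := by
  simpa [add_comm] using sum_comp_pairProfile (g := id) rfl hv

theorem eq_pairProfile_iff [Fintype β] (hv : v ∉ S) {k : β → ℕ} :
    k = pairProfile v S ↔ ∑ b, k b = #S + 2 ∧ k v = 2 ∧ ∀ b ∈ S, k b = 1 := by
  constructor
  · rintro rfl
    exact ⟨sum_pairProfile hv, pairProfile_self v S, fun b => pairProfile_of_mem hv⟩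
  · rintro ⟨hsum, hkv, hkS⟩
    -- The prescribed multiplicities already exhaust the total.
    have hle : ∀ b ∈ univ, pairProfile v S b ≤ k b := by
      intro b _
      unfold pairProfile
      split_ifs with hbv hbS
      · rw [hbv, hkv]
      · rw [hkS b hbS]
      · exact Nat.zero_le _
    have heq := (sum_eq_sum_iff_of_le hle).1 ((sum_pairProfile hv).trans hsum.symm)
    exact funext fun b => (heq b (mem_univ b)).symm

end PairProfile

/-- `s` consists of two elements in one fibre of `f` and single elements in `r` other fibres.
For `f = Prod.fst` and `r = 3`, these are the pair hands. -/
def IsPairWithKickers {α β : Type*} [DecidableEq β] (f : α → β) (r : ℕ) (s : Finset α) : Prop :=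
  ∃ v S, v ∉ S ∧ #S = r ∧ fiberCard f s = pairProfile v S

section Count

variable {α β : Type*} [Fintype α] [Fintype β] [DecidableEq β]

theorem card_filter_fiberCard_eq_pairProfile {f : α → β} {n : ℕ}
    (hf : ∀ b, fiberCard f univ b = n) {v : β} {S : Finset β} (hv : v ∉ S) :
    #{s : Finset α | fiberCard f s = pairProfile v S} = n.choose 2 * n ^ #S := by
  simp only [card_filter_fiberCard_eq, hf]
  simpa only [Nat.choose_one_right] using prod_comp_pairProfile n.choose_zero_right hv

theorem card_filter_isPairWithKickers {f : α → β} {n : ℕ} (hf : ∀ b, fiberCard f univ b = n)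
    (r : ℕ) [DecidablePred (IsPairWithKickers f r)] :
    #{s : Finset α | IsPairWithKickers f r s} =
      Fintype.card β * (Fintype.card β - 1).choose r * (n.choose 2 * n ^ r) := by
  classical
  let I : Finset (Σ _ : β, Finset β) := univ.sigma fun v => ({v}ᶜ : Finset β).powersetCard r
  have mem_I {p : Σ _ : β, Finset β} : p ∈ I ↔ p.1 ∉ p.2 ∧ #p.2 = r := by
    simp [I, mem_powersetCard]
  have card_I : #I = Fintype.card β * (Fintype.card β - 1).choose r := by
    simp [I, card_compl]
  have eq_biUnion : ({s : Finset α | IsPairWithKickers f r s} : Finset (Finset α)) =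
      I.biUnion fun p => {s | fiberCard f s = pairProfile p.1 p.2} := by
    ext s
    rw [mem_filter_univ, IsPairWithKickers]
    simp [mem_I, and_assoc]
  have disjoint : (I : Set (Σ _ : β, Finset β)).PairwiseDisjoint
      fun p => ({s | fiberCard f s = pairProfile p.1 p.2} : Finset (Finset α)) := by
    rintro ⟨v, S⟩ hp ⟨w, T⟩ hq hne
    rw [Function.onFun, disjoint_left]
    intro s hs hs'
    rw [mem_filter_univ] at hs hs'
    obtain ⟨rfl, rfl⟩ := (pairProfile_inj (mem_I.1 hp).1 (mem_I.1 hq).1).1 (hs.symm.trans hs')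
    exact hne rfl
  have card_fiber {p : Σ _ : β, Finset β} (hp : p ∈ I) :
      #{s : Finset α | fiberCard f s = pairProfile p.1 p.2} = n.choose 2 * n ^ r := by
    rw [card_filter_fiberCard_eq_pairProfile hf (mem_I.1 hp).1, (mem_I.1 hp).2]
  rw [eq_biUnion, card_biUnion disjoint, sum_congr rfl fun p hp => card_fiber hp, sum_const,
    card_I, smul_eq_mul]

end Count

theorem fiberCard_fst_univ {α β : Type*} [Fintype α] [Fintype β] [DecidableEq α] (a : α) :
    fiberCard Prod.fst (univ : Finset (α × β)) a = Fintype.card β := by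
  have fiber_eq : ({c ∈ (univ : Finset (α × β)) | c.1 = a} : Finset _) = {a} ×ˢ univ := by
    ext c
    simp only [mem_filter_univ, mem_product, mem_singleton, mem_univ, and_true]
  rw [fiberCard, fiber_eq, card_product, card_singleton, one_mul, card_univ]

theorem mem_pokerHands_and_pair_iff {h : Finset Card} :
    h ∈ pokerHands ∧ Pair h ↔ IsPairWithKickers Prod.fst 3 h := by
  have mem_pokerHands : h ∈ pokerHands ↔ ∑ v, fiberCard Prod.fst h v = 5 := by
    simp [pokerHands, mem_powersetCard, sum_fiberCard]
  rw [mem_pokerHands]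
  constructor
  · rintro ⟨hsum, v, hv, a, b, c, hab, hac, hbc, hav, hbv, hcv, ha, hb, hc⟩
    have hvS : v ∉ ({a, b, c} : Finset (Fin 13)) := by
      simp [hav.symm, hbv.symm, hcv.symm]
    have hS : #{a, b, c} = 3 := card_eq_three.2 ⟨a, b, c, hab, hac, hbc, rfl⟩
    refine ⟨v, {a, b, c}, hvS, hS, (eq_pairProfile_iff hvS).2 ⟨by rw [hsum, hS], hv, ?_⟩⟩
    simpa using ⟨ha, hb, hc⟩
  · rintro ⟨v, S, hvS, hS, hh⟩
    obtain ⟨hsum, hv, hone⟩ := (eq_pairProfile_iff hvS).1 hh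
    obtain ⟨a, b, c, hab, hac, hbc, rfl⟩ := card_eq_three.1 hS
    simp only [mem_insert, mem_singleton, not_or, forall_eq_or_imp, forall_eq] at hvS hone
    obtain ⟨hva, hvb, hvc⟩ := hvS
    exact ⟨by rw [hsum, hS], v, hv, a, b, c, hab, hac, hbc,
      Ne.symm hva, Ne.symm hvb, Ne.symm hvc, hone⟩

/-- There are exactly 1098240 Pair hands. -/
theorem card_pair : (pokerHands.filter Pair).card = 1098240 := by
  classical
  have filter_eq : pokerHands.filter Pair =
      ({h | IsPairWithKickers Prod.fst 3 h} : Finset (Finset Card)) := by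
    ext h
    rw [mem_filter, mem_pokerHands_and_pair_iff, mem_filter_univ]
  calc #(pokerHands.filter Pair)
      = 13 * Nat.choose 12 3 * (Nat.choose 4 2 * 4 ^ 3) := by
        rw [filter_eq, card_filter_isPairWithKickers fiberCard_fst_univ]
        simp only [Fintype.card_fin, Nat.add_one_sub_one]
    _ = 1098240 := by decide
end
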